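/- Let Δ ⊆ ℝ² be an LDP-polygon. Then v(Δ) + v(Δ*) ≥ 12, and equality v(Δ) + v(Δ*) = 12 holds if and only if Δ is a reflexive polygon (equivalently, if and only if the origin is the only interior lattice point of Δ). -/

import Mathlib

open MeasureTheory Filter Pointwise

noncomputable section

/-- The canonical embedding of a lattice point of `ℤ^d` into `ℝ^d`. -/
def coeLat {d : ℕ} (n : Fin d → ℤ) : Fin d → ℝ := fun i => (n i : ℝ)

/-- The set of lattice points lying in a subset `S ⊆ ℝ^d`. -/
def latticePoints {d : ℕ} (S : Set (Fin d → ℝ)) : Set (Fin d → ℤ) :=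
  {n | coeLat n ∈ S}

/-- A lattice polytope: the convex hull of finitely many points of `ℤ^d`. -/
def IsLatticePolytope {d : ℕ} (P : Set (Fin d → ℝ)) : Prop :=
  ∃ V : Finset (Fin d → ℤ), P = convexHull ℝ (coeLat '' (V : Set (Fin d → ℤ)))

/-- The dual (polar) body `P* = {y | ⟨y,x⟩ ≥ -1 ∀ x ∈ P}`. -/
def polarDual {d : ℕ} (P : Set (Fin d → ℝ)) : Set (Fin d → ℝ) :=
  {y | ∀ x ∈ P, -1 ≤ ∑ i, y i * x i}

/-- Dimension of a subset of `ℝ^d`: the dimension of its affine span. -/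
def dimSet {d : ℕ} (S : Set (Fin d → ℝ)) : ℕ :=
  Module.finrank ℝ (affineSpan ℝ S).direction

/-- A reflexive polytope: a lattice polytope containing the origin in its interior
whose dual is again a lattice polytope. -/
def IsReflexive {d : ℕ} (P : Set (Fin d → ℝ)) : Prop :=
  IsLatticePolytope P ∧ (0 : Fin d → ℝ) ∈ interior P ∧ IsLatticePolytope (polarDual P)

/-- A (nonempty, exposed) face of dimension `k` of a polytope `P`. -/
def IsFaceOfDim {d : ℕ} (P : Set (Fin d → ℝ)) (k : ℕ) (θ : Set (Fin d → ℝ)) : Prop :=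
  IsExposed ℝ P θ ∧ θ.Nonempty ∧ dimSet θ = k

/-- The dual face `θ* = {y ∈ P* | ⟨y,x⟩ = -1 ∀ x ∈ θ}` of a face `θ` of `P`. -/
def dualFace {d : ℕ} (P θ : Set (Fin d → ℝ)) : Set (Fin d → ℝ) :=
  {y ∈ polarDual P | ∀ x ∈ θ, ∑ i, y i * x i = -1}

/-- The normalized volume of a `k`-dimensional lattice polytope `θ ⊆ ℝ^d`:
`lim_{m → ∞} k! ⬝ |mθ ∩ ℤ^d| / m^k`. -/
def normVol {d : ℕ} (k : ℕ) (θ : Set (Fin d → ℝ)) : ℝ :=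
  limUnder atTop
    (fun m : ℕ => (Nat.factorial k : ℝ) * (latticePoints ((m : ℝ) • θ)).ncard / (m : ℝ) ^ k)

/-- An LDP-polygon: a 2-dimensional lattice polytope in `ℝ²` containing the origin
in its interior, all of whose vertices are primitive lattice vectors. -/
def IsLDP (Δ : Set (Fin 2 → ℝ)) : Prop :=
  IsLatticePolytope Δ ∧ dimSet Δ = 2 ∧ (0 : Fin 2 → ℝ) ∈ interior Δ ∧
    ∀ x ∈ Set.extremePoints ℝ Δ, ∃ n : Fin 2 → ℤ, coeLat n = x ∧ Int.gcd (n 0) (n 1) = 1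

/-- Normalized volume of a 2-dimensional compact convex set in `ℝ²`:
twice its Lebesgue area. -/
def v2 (P : Set (Fin 2 → ℝ)) : ℝ := 2 * (volume P).toReal

/-!
Cut `Δ` and its dual into triangles with apex the origin, and cut the triangles of the dual further
along the perpendiculars from the origin to its edges. Grouping the pieces by the edges `[u, w]` of
`Δ` writes `v(Δ) + v(Δ*)` as a sum of contributions `c(u, w)`, each depending on one cone only.
If `u`, `w` is a lattice basis, then `c(u, w) = c(u, u + w) + c(u + w, w)`, so refining a fan of
unimodular cones by mediants does not change its total. Any two such complete fans are refined by
the fan of all rays through lattice vectors of bounded norm, hence they have the same total, and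
the four quadrants show that it is `12`. The contribution of an arbitrary primitive cone is at least
that of its refinement, and the two agree exactly when the linear function with value `-1` at `u`
and `w` is integral, that is, when the vertex of `Δ*` dual to the edge `[u, w]` is a lattice point.
-/

/-! ### Planar linear algebra -/

section Wedge

open Matrix

variable {R : Type*} [CommRing R]

/-- The determinant of two plane vectors, twice the signed area of the triangle they span. -/
def wedge (u w : Fin 2 → R) : R := u 0 * w 1 - u 1 * w 0

lemma wedge_self (u : Fin 2 → R) : wedge u u = 0 := by
  simp only [wedge]; ring

lemma wedge_swap (u w : Fin 2 → R) : wedge w u = -wedge u w := by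
  simp only [wedge]; ring

lemma wedge_add_left (u v w : Fin 2 → R) : wedge (u + v) w = wedge u w + wedge v w := by
  simp only [wedge, Pi.add_apply]; ring

lemma wedge_add_right (u v w : Fin 2 → R) : wedge u (v + w) = wedge u v + wedge u w := by
  simp only [wedge, Pi.add_apply]; ring

lemma ne_zero_of_wedge_ne_zero_left {u w : Fin 2 → R} (h : wedge u w ≠ 0) : u ≠ 0 := by
  rintro rfl; simp [wedge] at h

lemma ne_zero_of_wedge_ne_zero_right {u w : Fin 2 → R} (h : wedge u w ≠ 0) : w ≠ 0 := by
  rintro rfl; simp [wedge] at h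

lemma wedge_smul_eq (u w x : Fin 2 → R) : wedge u w • x = wedge x w • u + wedge u x • w := by
  ext i
  fin_cases i <;> simp [wedge] <;> ring

lemma wedge_mul_dotProduct (u w x z : Fin 2 → R) :
    wedge u w * x ⬝ᵥ z = wedge x w * u ⬝ᵥ z + wedge u x * w ⬝ᵥ z := by
  simpa only [add_dotProduct, smul_dotProduct, smul_eq_mul] using
    congr($(wedge_smul_eq u w x) ⬝ᵥ z)

lemma wedge_mul_wedge (u w x z : Fin 2 → R) :
    wedge u w * wedge x z = wedge x w * wedge u z + wedge u x * wedge w z := by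
  simp only [wedge]; ring

lemma wedge_mul_wedge_eq_dotProduct (p q v z : Fin 2 → R) :
    wedge p q * wedge v z = p ⬝ᵥ v * q ⬝ᵥ z - p ⬝ᵥ z * q ⬝ᵥ v := by
  simp only [wedge, vec2_dotProduct]; ring

lemma add_dotProduct_self (u w : Fin 2 → R) :
    (u + w) ⬝ᵥ (u + w) = u ⬝ᵥ u + w ⬝ᵥ w + 2 * u ⬝ᵥ w := by
  rw [add_dotProduct, dotProduct_add, dotProduct_add, dotProduct_comm w u]; ring

/-- The vector `v` turned counterclockwise by a right angle; it represents the linear function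
`wedge v`. -/
def quarterTurn (v : Fin 2 → R) : Fin 2 → R := ![-v 1, v 0]

lemma quarterTurn_dotProduct (v z : Fin 2 → R) : quarterTurn v ⬝ᵥ z = wedge v z := by
  simp only [quarterTurn, wedge, vec2_dotProduct, cons_val_zero, cons_val_one]; ring

lemma quarterTurn_ne_zero {v : Fin 2 → R} (hv : v ≠ 0) : quarterTurn v ≠ 0 := by
  contrapose! hv
  simpa [quarterTurn, funext_iff, Fin.forall_fin_two, and_comm] using hv

lemma wedge_sq_mul_dotProduct_self (u w x : Fin 2 → R) :
    wedge u w ^ 2 * x ⬝ᵥ x = wedge x w ^ 2 * u ⬝ᵥ u + wedge u x ^ 2 * w ⬝ᵥ w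
      + 2 * (wedge x w * wedge u x * u ⬝ᵥ w) := by
  simp only [wedge, vec2_dotProduct]; ring

end Wedge

section InCone

variable {R : Type*} [CommRing R] [LinearOrder R] [IsStrictOrderedRing R] {u w x m : Fin 2 → R}

/-- `x` lies strictly inside the convex cone swept counterclockwise from `u` to `w`. The definition
is meant for `0 < wedge u w`, that is, for sweeps of less than half a turn. -/
def InCone (u w x : Fin 2 → R) : Prop := 0 < wedge u x ∧ 0 < wedge x w

lemma InCone.iff_or (huw : 0 < wedge u w) (hx : InCone u w x) (hm : wedge x m ≠ 0) :
    InCone u w m ↔ InCone u x m ∨ InCone x w m := by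
  have plucker := wedge_mul_wedge u w x m
  simp only [InCone, wedge_swap x m] at *
  constructor
  · rintro ⟨h₁, h₂⟩
    exact hm.lt_or_gt.imp (fun h => ⟨h₁, neg_pos.2 h⟩) (fun h => ⟨h, h₂⟩)
  · rintro (⟨h₁, h₂⟩ | ⟨h₁, h₂⟩)
    · refine ⟨h₁, ?_⟩
      rw [wedge_swap m w] at plucker
      nlinarith [mul_pos h₁ hx.2, mul_pos huw h₂, hx.1]
    · refine ⟨?_, h₂⟩
      rw [wedge_swap m w] at plucker
      nlinarith [mul_pos hx.1 h₂, mul_pos huw h₁, hx.2]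

lemma InCone.not_inCone (h : InCone u x m) : ¬InCone x w m :=
  fun h' => lt_asymm h'.1 (neg_pos.1 (wedge_swap x m ▸ h.2))

end InCone

section DotProduct

variable {ι R : Type*} [Fintype ι] [Ring R] [LinearOrder R] [IsStrictOrderedRing R]

lemma zero_le_dotProduct_self (u : ι → R) : 0 ≤ u ⬝ᵥ u :=
  Fintype.sum_nonneg fun i => mul_self_nonneg (u i)

lemma dotProduct_self_pos {u : ι → R} (hu : u ≠ 0) : 0 < u ⬝ᵥ u :=
  (zero_le_dotProduct_self u).lt_of_ne' (dotProduct_self_eq_zero.not.2 hu)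

end DotProduct

/-! ### The contribution of a cone -/

/-- The contribution of the cone spanned by an edge `[u, w]` of a polygon to the sum of the
normalized areas of the polygon and of its dual: the first summand is the share of the polygon. -/
def coneTerm {K : Type*} [Field K] (u w : Fin 2 → K) : K :=
  wedge u w + 2 / wedge u w - u ⬝ᵥ w / wedge u w * ((u ⬝ᵥ u)⁻¹ + (w ⬝ᵥ w)⁻¹)

lemma coneTerm_eq_add {K : Type*} [Field K] {u w x : Fin 2 → K} (huw : wedge u w ≠ 0)
    (hux : wedge u x ≠ 0) (hxw : wedge x w ≠ 0) (hu : u ⬝ᵥ u ≠ 0) (hw : w ⬝ᵥ w ≠ 0)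
    (hx : x ⬝ᵥ x ≠ 0) :
    coneTerm u w = coneTerm u x + coneTerm x w + (wedge u w - wedge u x - wedge x w)
      + (wedge u w - wedge u x - wedge x w) ^ 2 / (wedge u w * wedge u x * wedge x w) := by
  have hxu := wedge_mul_dotProduct u w x u
  have hxx := wedge_mul_dotProduct u w x x
  have hxw' := wedge_mul_dotProduct u w x w
  rw [dotProduct_comm w u, dotProduct_comm x u] at hxu
  rw [dotProduct_comm w x] at hxx
  simp only [coneTerm]
  generalize wedge u w = d at *
  generalize wedge u x = p at *
  generalize wedge x w = q at *
  generalize u ⬝ᵥ u = A at *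
  generalize w ⬝ᵥ w = B at *
  generalize x ⬝ᵥ x = X at *
  generalize u ⬝ᵥ w = c at *
  generalize u ⬝ᵥ x = a at *
  generalize x ⬝ᵥ w = b at *
  have hX : a / p + b / q = d * X / (p * q) := by
    rw [hxx]; field_simp
  have ha : a = (q * A + p * c) / d := by rw [← hxu]; field_simp
  have hb : b = (q * c + p * B) / d := by rw [← hxw']; field_simp
  have : a / p * (A⁻¹ + X⁻¹) + b / q * (X⁻¹ + B⁻¹) = a / p * A⁻¹ + b / q * B⁻¹ + d / (p * q) := by
    trans a / p * A⁻¹ + b / q * B⁻¹ + (a / p + b / q) * X⁻¹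
    · ring
    · rw [hX]; field_simp
  rw [ha, hb] at this
  subst ha
  subst hb
  field_simp at this ⊢
  linear_combination this

/-! ### Farey pairs -/

/-- A Farey pair of level `N`: a positively oriented lattice basis of vectors of squared norm at
most `N` whose mediant `u + w` is longer. The cones over the Farey pairs of level `N` are the
finest subdivision of the plane by rays through lattice vectors of squared norm at most `N`. -/
structure IsFareyPair (N : ℤ) (u w : Fin 2 → ℤ) : Prop where
  wedge_eq_one : wedge u w = 1
  left_le : u ⬝ᵥ u ≤ N
  right_le : w ⬝ᵥ w ≤ N
  lt_mediant : N < (u + w) ⬝ᵥ (u + w)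

namespace IsFareyPair

variable {N : ℤ} {u w x : Fin 2 → ℤ}

-- An obtuse pair with determinant one would have a short mediant, by Lagrange's identity.
lemma dotProduct_nonneg (h : IsFareyPair N u w) : 0 ≤ u ⬝ᵥ w := by
  have lagrange := wedge_mul_wedge_eq_dotProduct u w u w
  have mediant := h.lt_mediant
  rw [h.wedge_eq_one, dotProduct_comm w u] at lagrange
  rw [add_dotProduct_self] at mediant
  by_contra! hneg
  have hu : 1 - 2 * u ⬝ᵥ w ≤ u ⬝ᵥ u := by linarith [h.right_le]
  have hw : 1 - 2 * u ⬝ᵥ w ≤ w ⬝ᵥ w := by linarith [h.left_le]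
  nlinarith

lemma lt_of_inCone (h : IsFareyPair N u w) (hx : InCone u w x) : N < x ⬝ᵥ x := by
  have norm_eq := wedge_sq_mul_dotProduct_self u w x
  have mediant := h.lt_mediant
  rw [h.wedge_eq_one] at norm_eq
  rw [add_dotProduct_self] at mediant
  have ha : 1 ≤ wedge x w ^ 2 := one_le_pow₀ hx.2
  have hb : 1 ≤ wedge u x ^ 2 := one_le_pow₀ hx.1
  have hab : 1 ≤ wedge x w * wedge u x := one_le_mul_of_one_le_of_one_le hx.2 hx.1
  linarith [mul_le_mul_of_nonneg_right ha (zero_le_dotProduct_self u),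
    mul_le_mul_of_nonneg_right hb (zero_le_dotProduct_self w),
    mul_le_mul_of_nonneg_right hab h.dotProduct_nonneg]

lemma wedge_mediant_ne_zero (h : IsFareyPair N u w) (hx : x ⬝ᵥ x ≤ N) (hx0 : x ≠ 0) :
    wedge x (u + w) ≠ 0 := by
  intro h0
  have hpos := dotProduct_self_pos hx0
  have norm_eq := wedge_sq_mul_dotProduct_self u w x
  have hcoord : wedge u x = wedge x w := by
    rw [wedge_add_right, wedge_swap u x] at h0
    linarith
  have multiple : x ⬝ᵥ x = wedge x w ^ 2 * (u + w) ⬝ᵥ (u + w) := by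
    rw [h.wedge_eq_one, hcoord] at norm_eq
    rw [add_dotProduct_self]
    linarith
  have hne : wedge x w ≠ 0 := by
    intro hz
    simp [multiple, hz] at hpos
  have hone : 1 ≤ wedge x w ^ 2 := Int.add_one_le_iff.2 (sq_pos_of_ne_zero hne)
  linarith [h.lt_mediant, mul_le_mul_of_nonneg_right hone (zero_le_dotProduct_self (u + w))]

end IsFareyPair

lemma finite_setOf_isFareyPair (N : ℤ) :
    {l : (Fin 2 → ℤ) × (Fin 2 → ℤ) | IsFareyPair N l.1 l.2}.Finite := by
  have hbox : (Set.Icc (fun _ => -N) (fun _ => N) : Set (Fin 2 → ℤ)).Finite := Set.finite_Icc _ _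
  have mem_box (u : Fin 2 → ℤ) (hu : u ⬝ᵥ u ≤ N) : u ∈ Set.Icc (fun _ => -N) (fun _ => N) := by
    have hcoord (i : Fin 2) : |u i| ≤ N :=
      calc |u i| ≤ u i * u i := by rw [← abs_mul_abs_self]; nlinarith [abs_nonneg (u i)]
        _ ≤ u ⬝ᵥ u :=
          Finset.single_le_sum (fun j _ => mul_self_nonneg (u j)) (Finset.mem_univ i)
        _ ≤ N := hu
    exact ⟨fun i => (abs_le.1 (hcoord i)).1, fun i => (abs_le.1 (hcoord i)).2⟩
  exact (hbox.prod hbox).subset fun l hl => ⟨mem_box _ hl.left_le, mem_box _ hl.right_le⟩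

/-- The finset of all Farey pairs of level `N`. -/
def fareyPairs (N : ℤ) : Finset ((Fin 2 → ℤ) × (Fin 2 → ℤ)) :=
  (finite_setOf_isFareyPair N).toFinset

lemma mem_fareyPairs {N : ℤ} {l : (Fin 2 → ℤ) × (Fin 2 → ℤ)} :
    l ∈ fareyPairs N ↔ IsFareyPair N l.1 l.2 := by
  simp [fareyPairs]

section FareySum

variable {M : Type*} [AddCommMonoid M] {f : (Fin 2 → ℤ) → (Fin 2 → ℤ) → M} {N : ℤ}
  {u w x : Fin 2 → ℤ}

open Classical in
/-- The sum of `f` over the Farey pairs of level `N` whose cone lies in the cone of `u` and `w`,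
which is detected by the position of the mediant. -/
def fareySum (N : ℤ) (f : (Fin 2 → ℤ) → (Fin 2 → ℤ) → M) (u w : Fin 2 → ℤ) : M :=
  ∑ l ∈ fareyPairs N with InCone u w (l.1 + l.2), f l.1 l.2

lemma fareySum_eq_add (huw : 0 < wedge u w) (hx : InCone u w x) (hx0 : x ≠ 0)
    (hxN : x ⬝ᵥ x ≤ N) : fareySum N f u w = fareySum N f u x + fareySum N f x w := by
  classical
  rw [fareySum, fareySum, fareySum, ← Finset.sum_union
    (Finset.disjoint_filter.2 fun l _ hl => hl.not_inCone), ← Finset.filter_or]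
  refine Finset.sum_congr (Finset.filter_congr fun l hl => ?_) fun _ _ => rfl
  exact hx.iff_or huw ((mem_fareyPairs.1 hl).wedge_mediant_ne_zero hxN hx0)

lemma entries_of_det_eq_one {p a b r : ℤ} (hdet : p * r - a * b = 1) (hpb : 0 < p + b)
    (har : 0 < a + r) (hpa : ¬(0 < p ∧ 0 < a)) (hbr : ¬(0 < b ∧ 0 < r)) (har' : ¬(a < 0 ∧ 0 < r))
    (hpb' : ¬(0 < p ∧ b < 0)) : p = 1 ∧ a = 0 ∧ b = 0 ∧ r = 1 := by
  have ha : 0 ≤ a := by omega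
  have hb : 0 ≤ b := by omega
  obtain rfl : a = 0 := by
    by_contra ha0
    have hr : r ≤ 0 := by omega
    nlinarith [mul_nonneg (by omega : 0 ≤ b - (1 - p)) ha,
      mul_nonneg (by omega : 0 ≤ 1 - p) (by omega : 0 ≤ a - (1 - r))]
  obtain rfl : b = 0 := by omega
  have hpr : p * r = 1 := by linarith
  obtain ⟨rfl, rfl⟩ | h := Int.mul_eq_one_iff_eq_one_or_neg_one.1 hpr <;> omega

lemma IsFareyPair.eq_of_inCone {s t : Fin 2 → ℤ} (h : IsFareyPair N u w) (hl : IsFareyPair N s t)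
    (hm : InCone u w (s + t)) : s = u ∧ t = w := by
  have hs := wedge_smul_eq u w s
  have ht := wedge_smul_eq u w t
  have hdet := wedge_mul_wedge u w s t
  rw [h.wedge_eq_one, one_smul] at hs ht
  rw [h.wedge_eq_one, hl.wedge_eq_one, wedge_swap t w] at hdet
  rw [InCone, wedge_add_left, wedge_add_right] at hm
  obtain ⟨h₁, h₂, h₃, h₄⟩ := entries_of_det_eq_one (by linarith) hm.2 hm.1
    (fun hs' => (h.lt_of_inCone hs'.symm).not_ge hl.left_le)
    (fun ht' => (h.lt_of_inCone ht'.symm).not_ge hl.right_le)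
    (fun hu => (hl.lt_of_inCone ⟨by rw [wedge_swap u s]; linarith [hu.1], hu.2⟩).not_ge h.left_le)
    (fun hw => (hl.lt_of_inCone ⟨hw.1, by rw [wedge_swap t w]; linarith [hw.2]⟩).not_ge h.right_le)
  exact ⟨by simpa [h₁, h₂] using hs, by simpa [h₃, h₄] using ht⟩

lemma inCone_add_self (h : 0 < wedge u w) : InCone u w (u + w) := by
  simpa [InCone, wedge_add_left, wedge_add_right, wedge_self] using h

lemma IsFareyPair.fareySum_eq (h : IsFareyPair N u w) : fareySum N f u w = f u w := by
  classical
  rw [fareySum]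
  convert Finset.sum_singleton (fun l : (Fin 2 → ℤ) × (Fin 2 → ℤ) => f l.1 l.2) (u, w)
  ext ⟨s, t⟩
  simp only [Finset.mem_filter, mem_fareyPairs, Finset.mem_singleton, Prod.mk.injEq]
  refine ⟨fun hl => h.eq_of_inCone hl.1 hl.2, ?_⟩
  rintro ⟨rfl, rfl⟩
  exact ⟨h, inCone_add_self (h.wedge_eq_one ▸ one_pos)⟩

lemma dotProduct_lt_of_mediant_le (huw : wedge u w ≠ 0) (hN : (u + w) ⬝ᵥ (u + w) ≤ N) :
    u ⬝ᵥ w < N ∧ u ⬝ᵥ w < u ⬝ᵥ (u + w) ∧ u ⬝ᵥ w < (u + w) ⬝ᵥ w := by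
  have hu : 0 < u ⬝ᵥ u := dotProduct_self_pos (ne_zero_of_wedge_ne_zero_left huw)
  have hw : 0 < w ⬝ᵥ w := dotProduct_self_pos (ne_zero_of_wedge_ne_zero_right huw)
  have hsum : 0 ≤ (u + w) ⬝ᵥ (u + w) := zero_le_dotProduct_self _
  rw [add_dotProduct_self] at hN hsum
  rw [dotProduct_add, add_dotProduct]
  omega

lemma fareySum_eq_of_wedge_eq_one {u w : Fin 2 → ℤ}
    (hf : ∀ u w, wedge u w = 1 → f u w = f u (u + w) + f (u + w) w) (huw : wedge u w = 1)
    (hu : u ⬝ᵥ u ≤ N) (hw : w ⬝ᵥ w ≤ N) : fareySum N f u w = f u w := by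
  by_cases hN : N < (u + w) ⬝ᵥ (u + w)
  · exact IsFareyPair.fareySum_eq ⟨huw, hu, hw, hN⟩
  have huw₁ : wedge u (u + w) = 1 := by rw [wedge_add_right, wedge_self, zero_add, huw]
  have huw₂ : wedge (u + w) w = 1 := by rw [wedge_add_left, wedge_self, add_zero, huw]
  rw [fareySum_eq_add (by omega) (inCone_add_self (by omega))
      (ne_zero_of_wedge_ne_zero_right (huw₁ ▸ one_ne_zero)) (not_lt.1 hN),
    fareySum_eq_of_wedge_eq_one hf huw₁ hu (not_lt.1 hN),
    fareySum_eq_of_wedge_eq_one hf huw₂ (not_lt.1 hN) hw, ← hf u w huw]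
termination_by (N - u ⬝ᵥ w).toNat
decreasing_by all_goals
  have := dotProduct_lt_of_mediant_le (huw ▸ one_ne_zero) (not_lt.1 hN)
  omega

/-- A complete fan, given by the primitive generators `a e`, `b e` of its two-dimensional cones.
Completeness is only required in the form needed to sum over cones: every lattice point off the rays
lies in exactly one of the open cones. -/
structure IsCompleteFan {ι : Type*} (E : Finset ι) (a b : ι → Fin 2 → ℤ) : Prop where
  isCoprime_left : ∀ e ∈ E, IsCoprime (a e 0) (a e 1)
  isCoprime_right : ∀ e ∈ E, IsCoprime (b e 0) (b e 1)
  wedge_pos : ∀ e ∈ E, 0 < wedge (a e) (b e)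
  existsUnique_inCone : ∀ m : Fin 2 → ℤ, (∀ e ∈ E, wedge (a e) m ≠ 0 ∧ wedge (b e) m ≠ 0) →
    ∃! e, e ∈ E ∧ InCone (a e) (b e) m

lemma IsCompleteFan.sum_fareySum {ι : Type*} {E : Finset ι} {a b : ι → Fin 2 → ℤ}
    (hE : IsCompleteFan E a b) (ha : ∀ e ∈ E, a e ⬝ᵥ a e ≤ N) (hb : ∀ e ∈ E, b e ⬝ᵥ b e ≤ N) :
    ∑ e ∈ E, fareySum N f (a e) (b e) = ∑ l ∈ fareyPairs N, f l.1 l.2 := by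
  classical
  simp_rw [fareySum, Finset.sum_filter]
  rw [Finset.sum_comm]
  refine Finset.sum_congr rfl fun l hl => ?_
  have hl := mem_fareyPairs.1 hl
  obtain ⟨e, ⟨he, hle⟩, huniq⟩ := hE.existsUnique_inCone (l.1 + l.2) fun e he =>
    have hpos := (hE.wedge_pos e he).ne'
    ⟨hl.wedge_mediant_ne_zero (ha e he) (ne_zero_of_wedge_ne_zero_left hpos),
      hl.wedge_mediant_ne_zero (hb e he) (ne_zero_of_wedge_ne_zero_right hpos)⟩
  rw [Finset.sum_eq_single_of_mem e he fun e' he' hne =>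
    if_neg fun hle' => hne (huniq e' ⟨he', hle'⟩), if_pos hle]

/-- The generators of the four coordinate quadrants, in counterclockwise order. -/
def quadrantRay : Fin 4 → Fin 2 → ℤ := ![![1, 0], ![0, 1], ![-1, 0], ![0, -1]]

lemma isCompleteFan_quadrantRay :
    IsCompleteFan Finset.univ quadrantRay fun i => quadrantRay (i + 1) where
  isCoprime_left e _ := by fin_cases e <;> simp [quadrantRay, Int.isCoprime_iff_gcd_eq_one]
  isCoprime_right e _ := by fin_cases e <;> simp [quadrantRay, Int.isCoprime_iff_gcd_eq_one]
  wedge_pos e _ := by fin_cases e <;> simp [quadrantRay, wedge]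
  existsUnique_inCone m hm := by
    have h₀ : m 1 ≠ 0 := by simpa [wedge, quadrantRay] using (hm 0 (Finset.mem_univ _)).1
    have h₁ : m 0 ≠ 0 := by simpa [wedge, quadrantRay] using (hm 1 (Finset.mem_univ _)).1
    have inCone_iff (k : Fin 4) : InCone (quadrantRay k) (quadrantRay (k + 1)) m ↔
        ![0 < m 1 ∧ 0 < m 0, m 0 < 0 ∧ 0 < m 1, m 1 < 0 ∧ m 0 < 0, 0 < m 0 ∧ m 1 < 0] k := by
      fin_cases k <;> simp [InCone, wedge, quadrantRay]
    simp only [Finset.mem_univ, true_and, inCone_iff, ExistsUnique, Fin.exists_fin_succ,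
      Fin.forall_fin_succ]
    rcases h₀.lt_or_gt with h | h <;> rcases h₁.lt_or_gt with h' | h' <;>
      simp [h, h', h.le, h'.le]

end FareySum

section ConeTerm

lemma wedge_coeLat (u w : Fin 2 → ℤ) : wedge (coeLat u) (coeLat w) = wedge u w := by
  simp [wedge, coeLat]

lemma dotProduct_coeLat {d : ℕ} (u w : Fin d → ℤ) : coeLat u ⬝ᵥ coeLat w = (u ⬝ᵥ w : ℤ) := by
  simp [dotProduct, coeLat]

lemma isCoprime_of_wedge_eq_one_right {u x : Fin 2 → ℤ} (h : wedge u x = 1) :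
    IsCoprime (x 0) (x 1) :=
  ⟨-u 1, u 0, by rw [wedge] at h; linarith⟩

lemma coneTerm_coeLat_eq_add {u w x : Fin 2 → ℤ} (huw : wedge u w ≠ 0) (hux : wedge u x = 1)
    (hxw : wedge x w ≠ 0) :
    coneTerm (coeLat u) (coeLat w) =
      coneTerm (coeLat u) (coeLat x) + coneTerm (coeLat x) (coeLat w)
        + (wedge u w - (wedge x w + 1) : ℤ)
        + ((wedge u w - (wedge x w + 1) : ℤ) : ℝ) ^ 2 / (wedge u w * wedge x w : ℤ) := by
  have norm_ne {v : Fin 2 → ℤ} (hv : v ≠ 0) : coeLat v ⬝ᵥ coeLat v ≠ 0 := by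
    rw [dotProduct_coeLat]
    exact_mod_cast (dotProduct_self_pos hv).ne'
  rw [coneTerm_eq_add (x := coeLat x) _ _ _ (norm_ne (ne_zero_of_wedge_ne_zero_left huw))
    (norm_ne (ne_zero_of_wedge_ne_zero_right huw)) (norm_ne (ne_zero_of_wedge_ne_zero_left hxw))]
  · simp only [wedge_coeLat, hux]
    push_cast
    ring
  · rwa [wedge_coeLat, Int.cast_ne_zero]
  · simp [wedge_coeLat, hux]
  · rwa [wedge_coeLat, Int.cast_ne_zero]

/-- The sum of the contributions of the Farey cones of level `N` in the cone of `u` and `w`. -/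
def fareyConeSum (N : ℤ) (u w : Fin 2 → ℤ) : ℝ :=
  fareySum N (fun s t => coneTerm (coeLat s) (coeLat t)) u w

variable {N : ℤ} {u w x : Fin 2 → ℤ}

lemma fareyConeSum_eq_of_wedge_eq_one (huw : wedge u w = 1) (hu : u ⬝ᵥ u ≤ N) (hw : w ⬝ᵥ w ≤ N) :
    fareyConeSum N u w = coneTerm (coeLat u) (coeLat w) := by
  refine fareySum_eq_of_wedge_eq_one (fun u w huw => ?_) huw hu hw
  have huw' : wedge u (u + w) = 1 := by rw [wedge_add_right, wedge_self, zero_add, huw]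
  have huw'' : wedge (u + w) w = 1 := by rw [wedge_add_left, wedge_self, add_zero, huw]
  rw [coneTerm_coeLat_eq_add (huw ▸ one_ne_zero) huw' (huw'' ▸ one_ne_zero), huw, huw'']
  norm_num

lemma IsCompleteFan.sum_fareyConeSum {ι : Type*} {E : Finset ι} {a b : ι → Fin 2 → ℤ}
    (hE : IsCompleteFan E a b) (ha : ∀ e ∈ E, a e ⬝ᵥ a e ≤ N) (hb : ∀ e ∈ E, b e ⬝ᵥ b e ≤ N) :
    ∑ e ∈ E, fareyConeSum N (a e) (b e) =
      ∑ l ∈ fareyPairs N, coneTerm (coeLat l.1) (coeLat l.2) :=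
  hE.sum_fareySum (f := fun s t => coneTerm (coeLat s) (coeLat t)) ha hb

-- Every complete fan gives the same total, so it can be read off the quadrants, each giving `3`.
lemma sum_fareyPairs_coneTerm (hN : 1 ≤ N) :
    ∑ l ∈ fareyPairs N, coneTerm (coeLat l.1) (coeLat l.2) = 12 := by
  have wedge_eq : ∀ i, wedge (quadrantRay i) (quadrantRay (i + 1)) = 1 := by decide
  have dot_eq : ∀ i, quadrantRay i ⬝ᵥ quadrantRay (i + 1) = 0 := by decide
  have norm_eq : ∀ i, quadrantRay i ⬝ᵥ quadrantRay i = 1 := by decide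
  have norm_le (i : Fin 4) : quadrantRay i ⬝ᵥ quadrantRay i ≤ N := (norm_eq i).trans_le hN
  have quadrant (i : Fin 4) : fareyConeSum N (quadrantRay i) (quadrantRay (i + 1)) = 3 := by
    rw [fareyConeSum_eq_of_wedge_eq_one (wedge_eq i) (norm_le _) (norm_le _), coneTerm]
    simp only [wedge_coeLat, dotProduct_coeLat, wedge_eq, dot_eq, norm_eq]
    norm_num
  calc ∑ l ∈ fareyPairs N, coneTerm (coeLat l.1) (coeLat l.2)
      = ∑ i, fareyConeSum N (quadrantRay i) (quadrantRay (i + 1)) :=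
        (isCompleteFan_quadrantRay.sum_fareyConeSum (fun _ _ => norm_le _)
          fun _ _ => norm_le _).symm
    _ = 12 := by simp only [quadrant, Finset.sum_const, Finset.card_univ]; norm_num

/-! ### Superadditivity over a primitive cone -/

lemma exists_wedge_eq_one (hu : IsCoprime (u 0) (u 1)) (hw : IsCoprime (w 0) (w 1))
    (huw : 1 < wedge u w) : ∃ x, wedge u x = 1 ∧ 0 < wedge x w ∧ wedge x w < wedge u w := by
  obtain ⟨a, b, hab⟩ := hu
  obtain ⟨z, hz⟩ : ∃ z : Fin 2 → ℤ, wedge u z = 1 := ⟨![-b, a], by simp [wedge]; linarith⟩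
  have not_dvd : ¬wedge u w ∣ wedge z w := by
    intro hdvd
    have hw' := wedge_smul_eq u z w
    rw [hz, one_smul, wedge_swap z w] at hw'
    have dvd_coord (i : Fin 2) : wedge u w ∣ w i := by
      rw [congrFun hw' i]
      exact dvd_add ((hdvd.neg_right).mul_right _) (dvd_mul_right _ _)
    have := Int.isUnit_iff.1 (hw.isUnit_of_dvd' (dvd_coord 0) (dvd_coord 1))
    omega
  refine ⟨z - (wedge z w / wedge u w) • u, ?_, ?_⟩
  · rw [← hz]
    simp [wedge]
    ring
  · have hmod : wedge (z - (wedge z w / wedge u w) • u) w = wedge z w % wedge u w := by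
      rw [Int.emod_def]
      simp [wedge]
      ring
    rw [hmod]
    exact ⟨(Int.emod_pos_of_not_dvd not_dvd).resolve_left (by omega),
      Int.emod_lt_of_pos _ (by omega)⟩

lemma dotProduct_self_le_of_wedge_le (hux : wedge u x = 1) (hxw : 0 ≤ wedge x w)
    (hlt : wedge x w < wedge u w) (hu : u ⬝ᵥ u ≤ N) (hw : w ⬝ᵥ w ≤ N) : x ⬝ᵥ x ≤ N := by
  have norm_eq := wedge_sq_mul_dotProduct_self u w x
  have huw : 2 * u ⬝ᵥ w ≤ u ⬝ᵥ u + w ⬝ᵥ w := by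
    have := zero_le_dotProduct_self (u - w)
    rw [sub_dotProduct, dotProduct_sub, dotProduct_sub, dotProduct_comm w u] at this
    linarith
  have hN : 0 ≤ N := (zero_le_dotProduct_self u).trans hu
  rw [hux] at norm_eq
  refine le_of_mul_le_mul_left ?_ (pow_pos (hxw.trans_lt hlt) 2)
  calc wedge u w ^ 2 * x ⬝ᵥ x
      ≤ (wedge x w + 1) ^ 2 * N := by
        nlinarith [mul_le_mul_of_nonneg_left hu (sq_nonneg (wedge x w)),
          mul_le_mul_of_nonneg_left (by linarith : u ⬝ᵥ w ≤ N) hxw]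
    _ ≤ wedge u w ^ 2 * N := by gcongr; exact hlt

/-- The cone of `u` and `w` is Gorenstein: for primitive `u` and `w`, the linear function with value
`-1` at both generators is integral. -/
def IsGorenstein (u w : Fin 2 → ℤ) : Prop := ∀ i, wedge u w ∣ w i - u i

lemma isGorenstein_iff (hux : wedge u x = 1) (hxw : 0 ≤ wedge x w) (hlt : wedge x w < wedge u w) :
    IsGorenstein u w ↔ wedge u w = wedge x w + 1 := by
  have hx := wedge_smul_eq u w x
  rw [hux, one_smul] at hx
  constructor
  · intro h
    have hdvd : wedge u w ∣ wedge x w + 1 := by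
      have hsum : wedge x w + 1 = x 0 * (w 1 - u 1) - x 1 * (w 0 - u 0) := by
        rw [← hux, wedge, wedge]
        ring
      exact hsum ▸ dvd_sub ((h 1).mul_left (x 0)) ((h 0).mul_left (x 1))
    have := Int.le_of_dvd (by omega) hdvd
    omega
  · intro h i
    have hxi := congrFun hx i
    rw [h] at hxi ⊢
    simp only [Pi.smul_apply, Pi.add_apply, smul_eq_mul] at hxi
    exact ⟨x i - u i, by linarith⟩

lemma isGorenstein_right (hux : wedge u x = 1) (h : wedge u w = wedge x w + 1) :
    IsGorenstein x w := by
  have hx := wedge_smul_eq u w x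
  rw [hux, one_smul, h] at hx
  intro i
  have hxi := congrFun hx i
  simp only [Pi.smul_apply, Pi.add_apply, smul_eq_mul] at hxi
  exact ⟨x i - u i, by linarith⟩

theorem fareyConeSum_le_coneTerm {u w : Fin 2 → ℤ} (hu : IsCoprime (u 0) (u 1))
    (hw : IsCoprime (w 0) (w 1)) (huw : 0 < wedge u w) (huN : u ⬝ᵥ u ≤ N) (hwN : w ⬝ᵥ w ≤ N) :
    fareyConeSum N u w ≤ coneTerm (coeLat u) (coeLat w) ∧
      (fareyConeSum N u w = coneTerm (coeLat u) (coeLat w) ↔ IsGorenstein u w) := by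
  obtain h1 | h1 : wedge u w = 1 ∨ 1 < wedge u w := by omega
  · have heq := fareyConeSum_eq_of_wedge_eq_one h1 huN hwN
    exact ⟨heq.le, iff_of_true heq fun i => h1 ▸ one_dvd _⟩
  obtain ⟨x, hux, hxw, hlt⟩ := exists_wedge_eq_one hu hw h1
  have hxN := dotProduct_self_le_of_wedge_le hux hxw.le hlt huN hwN
  obtain ⟨ih_le, ih_eq⟩ :=
    fareyConeSum_le_coneTerm (isCoprime_of_wedge_eq_one_right hux) hw hxw hxN hwN
  have hsplit : fareyConeSum N u w = coneTerm (coeLat u) (coeLat x) + fareyConeSum N x w := by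
    rw [← fareyConeSum_eq_of_wedge_eq_one hux huN hxN]
    exact fareySum_eq_add huw ⟨hux ▸ one_pos, hxw⟩ (ne_zero_of_wedge_ne_zero_left hxw.ne') hxN
  rw [hsplit, coneTerm_coeLat_eq_add huw.ne' hux hxw.ne', isGorenstein_iff hux hxw.le hlt]
  have defect_nonneg : (0 : ℝ) ≤ (wedge u w - (wedge x w + 1) : ℤ) := by
    exact_mod_cast sub_nonneg.2 hlt
  have square_nonneg : 0 ≤ ((wedge u w - (wedge x w + 1) : ℤ) : ℝ) ^ 2 /
      (wedge u w * wedge x w : ℤ) := by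
    have : (0 : ℝ) < (wedge u w * wedge x w : ℤ) := by exact_mod_cast mul_pos huw hxw
    positivity
  refine ⟨by linarith, fun heq => ?_, fun heq => ?_⟩
  · have : ((wedge u w - (wedge x w + 1) : ℤ) : ℝ) = 0 := by linarith
    exact sub_eq_zero.1 (by exact_mod_cast this)
  · rw [ih_eq.2 (isGorenstein_right hux heq), heq]
    simp
termination_by (wedge u w).toNat
decreasing_by omega

theorem IsCompleteFan.twelve_le_sum_coneTerm {ι : Type*} {E : Finset ι} {a b : ι → Fin 2 → ℤ}
    (hE : IsCompleteFan E a b) :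
    12 ≤ ∑ e ∈ E, coneTerm (coeLat (a e)) (coeLat (b e)) ∧
      (∑ e ∈ E, coneTerm (coeLat (a e)) (coeLat (b e)) = 12 ↔
        ∀ e ∈ E, IsGorenstein (a e) (b e)) := by
  obtain ⟨N, hN, hE_le⟩ : ∃ N : ℤ, 1 ≤ N ∧ ∀ e ∈ E, a e ⬝ᵥ a e ≤ N ∧ b e ⬝ᵥ b e ≤ N := by
    obtain ⟨N, hN⟩ := (E.image fun e => max (a e ⬝ᵥ a e) (b e ⬝ᵥ b e)).exists_le
    refine ⟨max 1 N, le_max_left _ _, fun e he => ?_⟩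
    exact max_le_iff.1 ((hN _ (Finset.mem_image_of_mem _ he)).trans (le_max_right _ _))
  have local_bound e (he : e ∈ E) := fareyConeSum_le_coneTerm (hE.isCoprime_left e he)
    (hE.isCoprime_right e he) (hE.wedge_pos e he) (hE_le e he).1 (hE_le e he).2
  have total : ∑ e ∈ E, fareyConeSum N (a e) (b e) = 12 :=
    (hE.sum_fareyConeSum (fun e he => (hE_le e he).1) fun e he => (hE_le e he).2).trans
      (sum_fareyPairs_coneTerm hN)
  rw [← total, eq_comm, Finset.sum_eq_sum_iff_of_le fun e he => (local_bound e he).1]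
  exact ⟨Finset.sum_le_sum fun e he => (local_bound e he).1,
    forall₂_congr fun e he => (local_bound e he).2⟩

end ConeTerm

/-! ### Polar duals -/

section PolarDual

variable {d : ℕ} {s : Set (Fin d → ℝ)}

lemma mem_polarDual {y : Fin d → ℝ} : y ∈ polarDual s ↔ ∀ x ∈ s, -1 ≤ y ⬝ᵥ x := Iff.rfl

lemma convex_setOf_neg_one_le_dotProduct (y : Fin d → ℝ) : Convex ℝ {x | -1 ≤ y ⬝ᵥ x} :=
  convex_halfSpace_ge (dotProductEquiv ℝ (Fin d) y).isLinear (-1)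

lemma polarDual_convexHull : polarDual (convexHull ℝ s) = polarDual s :=
  Set.Subset.antisymm (fun _ hy x hx => hy x (subset_convexHull ℝ s hx))
    fun y hy => convexHull_min hy (convex_setOf_neg_one_le_dotProduct y)

lemma convex_polarDual (s : Set (Fin d → ℝ)) : Convex ℝ (polarDual s) := by
  intro y hy z hz a b ha hb hab
  rw [mem_polarDual] at *
  intro x hx
  rw [add_dotProduct, smul_dotProduct, smul_dotProduct, smul_eq_mul, smul_eq_mul]
  nlinarith [hy x hx, hz x hx]

lemma dotProduct_eq_neg_one_of_mem_openSegment {y z p x : Fin d → ℝ} (hy : y ∈ polarDual s)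
    (hz : z ∈ polarDual s) (hp : p ∈ openSegment ℝ y z) (hx : x ∈ s) (hpx : p ⬝ᵥ x = -1) :
    y ⬝ᵥ x = -1 := by
  obtain ⟨a, b, ha, hb, hab, rfl⟩ := hp
  rw [add_dotProduct, smul_dotProduct, smul_dotProduct, smul_eq_mul, smul_eq_mul] at hpx
  nlinarith [mem_polarDual.1 hy x hx, mem_polarDual.1 hz x hx]

lemma zero_mem_interior_polarDual (hs : s.Finite) : 0 ∈ interior (polarDual s) := by
  refine mem_interior.2 ⟨⋂ x ∈ s, {y | -1 < y ⬝ᵥ x}, fun y hy x hx => ?_,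
    hs.isOpen_biInter fun x _ => isOpen_lt continuous_const (by fun_prop), ?_⟩
  · exact le_of_lt (Set.mem_iInter₂.1 hy x hx)
  · simp

lemma exists_dotProduct_pos (hs : 0 ∈ interior s) {q : Fin d → ℝ} (hq : q ≠ 0) :
    ∃ x ∈ s, 0 < q ⬝ᵥ x := by
  obtain ⟨r, hr, x, hx, hrx⟩ :=
    (absorbent_nhds_zero (𝕜 := ℝ) (mem_interior_iff_mem_nhds.1 hs)).gauge_set_nonempty (x := q)
  have hrx : r • x = q := hrx
  refine ⟨x, hx, pos_of_mul_pos_right ?_ (le_of_lt hr)⟩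
  rw [← smul_eq_mul, ← dotProduct_smul, hrx]
  exact dotProduct_self_pos hq

lemma exists_mem_polarDual_dotProduct_eq_neg_one (hconv : Convex ℝ s) (h0 : 0 ∈ interior s)
    {v : Fin d → ℝ} (hv : v ∉ interior s) : ∃ y ∈ polarDual s, y ⬝ᵥ v = -1 := by
  obtain ⟨f, c, hf, hle, hge⟩ := geometric_hahn_banach_of_nonempty_interior hconv
    (convex_singleton v) (Set.disjoint_singleton_right.2 hv) ⟨0, h0⟩ (Set.singleton_nonempty v)
  obtain ⟨q, hq⟩ := (dotProductEquiv ℝ (Fin d)).surjective f.toLinearMap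
  have hqf (x) : q ⬝ᵥ x = f x := congr($hq x)
  have hmax x (hx : x ∈ s) : q ⬝ᵥ x ≤ q ⬝ᵥ v := by
    rw [hqf, hqf]
    exact (hle x hx).trans (hge v rfl)
  have hq0 : q ≠ 0 := by
    rintro rfl
    exact hf (ContinuousLinearMap.ext fun x => by simpa using (hqf x).symm)
  obtain ⟨x, hx, hpos⟩ := exists_dotProduct_pos h0 hq0
  have hqv : 0 < q ⬝ᵥ v := hpos.trans_le (hmax x hx)
  refine ⟨-(q ⬝ᵥ v)⁻¹ • q, mem_polarDual.2 fun z hz => ?_, ?_⟩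
  · rw [smul_dotProduct, smul_eq_mul, neg_mul, neg_le_neg_iff, inv_mul_le_one₀ hqv]
    exact hmax z hz
  · rw [smul_dotProduct, smul_eq_mul, neg_mul, inv_mul_cancel₀ hqv.ne']

end PolarDual

section ExtremePoints

variable {𝕜 E : Type*} [Field 𝕜] [LinearOrder 𝕜] [IsStrictOrderedRing 𝕜] [AddCommGroup E]
  [Module 𝕜 E] {s : Set E}

lemma not_collinear_of_mem_extremePoints {x y z : E} (hx : x ∈ s.extremePoints 𝕜)
    (hy : y ∈ s.extremePoints 𝕜) (hz : z ∈ s.extremePoints 𝕜) (hxy : x ≠ y) (hyz : y ≠ z)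
    (hzx : z ≠ x) : ¬Collinear 𝕜 {x, y, z} := by
  have not_wbtw {a b c : E} (ha : a ∈ s.extremePoints 𝕜) (hb : b ∈ s.extremePoints 𝕜)
      (hc : c ∈ s.extremePoints 𝕜) (hab : a ≠ b) (hbc : b ≠ c) : ¬Wbtw 𝕜 a b c := fun h =>
    ((mem_extremePoints_iff_forall_segment.1 hb).2 a ha.1 c hc.1
      (mem_segment_iff_wbtw.2 h)).elim hab hbc.symm
  intro h
  rcases h.wbtw_or_wbtw_or_wbtw with h | h | h
  · exact not_wbtw hx hy hz hxy hyz h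
  · exact not_wbtw hy hz hx hyz hzx h
  · exact not_wbtw hz hx hy hzx hxy h

end ExtremePoints

/-! ### Polygons and their edges -/

section DualVertex

variable {K : Type*} [Field K]

/-- The point `y` with `y ⬝ᵥ u = y ⬝ᵥ w = -1`: the vertex of the dual polygon which corresponds to
an edge `[u, w]`. -/
def dualVertex (u w : Fin 2 → K) : Fin 2 → K :=
  ![(u 1 - w 1) / wedge u w, (w 0 - u 0) / wedge u w]

variable {u v w t x y : Fin 2 → K}

lemma dualVertex_dotProduct (u w z : Fin 2 → K) :
    dualVertex u w ⬝ᵥ z = -((wedge z w + wedge u z) / wedge u w) := by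
  simp only [dualVertex, wedge, Matrix.vec2_dotProduct, Matrix.cons_val_zero, Matrix.cons_val_one]
  ring

lemma dualVertex_dotProduct_left (h : wedge u w ≠ 0) : dualVertex u w ⬝ᵥ u = -1 := by
  rw [dualVertex_dotProduct, wedge_self, add_zero, div_self h]

lemma dualVertex_dotProduct_right (h : wedge u w ≠ 0) : dualVertex u w ⬝ᵥ w = -1 := by
  rw [dualVertex_dotProduct, wedge_self, zero_add, div_self h]

lemma eq_dualVertex (h : wedge u w ≠ 0) (hu : y ⬝ᵥ u = -1) (hw : y ⬝ᵥ w = -1) :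
    y = dualVertex u w := by
  rw [Matrix.vec2_dotProduct] at hu hw
  ext i
  fin_cases i
  · refine (eq_div_iff h).2 ?_
    simp only [wedge, Fin.zero_eta]
    linear_combination w 1 * hu - u 1 * hw
  · refine (eq_div_iff h).2 ?_
    simp only [wedge, Fin.mk_one]
    linear_combination u 0 * hw - w 0 * hu

lemma wedge_dualVertex_mul_wedge (htv : wedge t v ≠ 0) (hvw : wedge v w ≠ 0) (z : Fin 2 → K) :
    wedge (dualVertex t v) (dualVertex v w) * wedge v z =
      dualVertex t v ⬝ᵥ z - dualVertex v w ⬝ᵥ z := by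
  rw [wedge_mul_wedge_eq_dotProduct, dualVertex_dotProduct_right htv,
    dualVertex_dotProduct_left hvw]
  ring

variable [LinearOrder K] [IsStrictOrderedRing K]

lemma wedge_dualVertex (htv : wedge t v ≠ 0) (hvw : wedge v w ≠ 0) :
    wedge (dualVertex t v) (dualVertex v w) =
      (1 - t ⬝ᵥ v / v ⬝ᵥ v) / wedge t v + (1 - v ⬝ᵥ w / v ⬝ᵥ v) / wedge v w := by
  have hv : v ⬝ᵥ v ≠ 0 := (dotProduct_self_pos (ne_zero_of_wedge_ne_zero_left hvw)).ne'
  have htw := wedge_mul_dotProduct t w v v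
  rw [dotProduct_comm w v] at htw
  calc wedge (dualVertex t v) (dualVertex v w)
      = (wedge t v + wedge v w - wedge t w) / (wedge t v * wedge v w) := by
        simp only [dualVertex, wedge, Matrix.cons_val_zero, Matrix.cons_val_one] at htv hvw ⊢
        field_simp
        ring
    _ = (1 - t ⬝ᵥ v / v ⬝ᵥ v) / wedge t v + (1 - v ⬝ᵥ w / v ⬝ᵥ v) / wedge v w := by
        field_simp
        linear_combination -htw

lemma dualVertex_dotProduct_le (h : 0 < wedge u w) (hux : 0 ≤ wedge u x) (hxw : 0 ≤ wedge x w)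
    (hu : -1 ≤ y ⬝ᵥ u) (hw : -1 ≤ y ⬝ᵥ w) : dualVertex u w ⬝ᵥ x ≤ y ⬝ᵥ x := by
  have hyx := wedge_mul_dotProduct u w x y
  rw [dualVertex_dotProduct, ← neg_div, div_le_iff₀ h]
  rw [dotProduct_comm x, dotProduct_comm u, dotProduct_comm w] at hyx
  nlinarith

lemma dualVertex_dotProduct_lt (h : 0 < wedge u w) (hx : InCone u w x) (hu : -1 ≤ y ⬝ᵥ u)
    (hw : -1 ≤ y ⬝ᵥ w) (hy : y ≠ dualVertex u w) : dualVertex u w ⬝ᵥ x < y ⬝ᵥ x := by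
  refine (dualVertex_dotProduct_le h hx.1.le hx.2.le hu hw).lt_of_ne fun heq => hy ?_
  have hyx := wedge_mul_dotProduct u w x y
  rw [dualVertex_dotProduct, ← neg_div, div_eq_iff h.ne'] at heq
  rw [dotProduct_comm x, dotProduct_comm u, dotProduct_comm w] at hyx
  refine eq_dualVertex h.ne' ?_ ?_
  · nlinarith [mul_nonneg hx.1.le (sub_nonneg.2 hw), hx.2]
  · nlinarith [mul_nonneg hx.2.le (sub_nonneg.2 hu), hx.1]

end DualVertex

/-- `V` is the vertex set of the polygon `Δ`, a polygon with the origin in its interior. -/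
structure IsVertexSet (V : Finset (Fin 2 → ℝ)) (Δ : Set (Fin 2 → ℝ)) : Prop where
  convexHull_eq : convexHull ℝ (V : Set (Fin 2 → ℝ)) = Δ
  extremePoints_eq : Set.extremePoints ℝ Δ = V
  zero_mem_interior : 0 ∈ interior Δ

/-- `[u, w]` is a counterclockwise edge of the polygon with vertex set `V`: all of `V` satisfies the
inequality which defines the supporting half-plane of `u` and `w`. -/
structure IsEdge (V : Finset (Fin 2 → ℝ)) (u w : Fin 2 → ℝ) : Prop where
  left_mem : u ∈ V
  right_mem : w ∈ V
  wedge_pos : 0 < wedge u w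
  neg_one_le : ∀ z ∈ V, -1 ≤ dualVertex u w ⬝ᵥ z

section Polygon

variable {V : Finset (Fin 2 → ℝ)} {Δ : Set (Fin 2 → ℝ)} {u u' v w w' t t' x z : Fin 2 → ℝ}

lemma IsEdge.ne (h : IsEdge V u w) : u ≠ w := by
  rintro rfl
  exact h.wedge_pos.ne' (wedge_self u)

namespace IsVertexSet

lemma mem_extremePoints (hV : IsVertexSet V Δ) (hv : v ∈ V) : v ∈ Set.extremePoints ℝ Δ :=
  hV.extremePoints_eq ▸ hv

lemma convex (hV : IsVertexSet V Δ) : Convex ℝ Δ :=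
  hV.convexHull_eq ▸ convex_convexHull ℝ _

lemma polarDual_eq (hV : IsVertexSet V Δ) : polarDual Δ = polarDual V := by
  rw [← hV.convexHull_eq, polarDual_convexHull]

lemma notMem_interior (hV : IsVertexSet V Δ) (hv : v ∈ V) : v ∉ interior Δ := fun h =>
  Set.disjoint_left.1 (disjoint_interior_extremePoints Δ) h (hV.mem_extremePoints hv)

lemma ne_zero (hV : IsVertexSet V Δ) (hv : v ∈ V) : v ≠ 0 := by
  rintro rfl
  exact hV.notMem_interior hv hV.zero_mem_interior

lemma nonempty (hV : IsVertexSet V Δ) : V.Nonempty := by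
  rw [← Finset.coe_nonempty, ← convexHull_nonempty_iff (𝕜 := ℝ), hV.convexHull_eq]
  exact ⟨0, interior_subset hV.zero_mem_interior⟩

lemma exists_mem_dotProduct_pos (hV : IsVertexSet V Δ) {q : Fin 2 → ℝ} (hq : q ≠ 0) :
    ∃ z ∈ V, 0 < q ⬝ᵥ z := by
  obtain ⟨x, hx, hqx⟩ := exists_dotProduct_pos hV.zero_mem_interior hq
  rw [← hV.convexHull_eq] at hx
  obtain ⟨z, hz, hxz⟩ := ((dotProductEquiv ℝ (Fin 2) q).convexOn
    (convex_convexHull ℝ _)).exists_ge_of_mem_convexHull (subset_convexHull ℝ _) hx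
  exact ⟨z, hz, hqx.trans_le hxz⟩

/-- Turn a supporting line at `v` in the direction given by `q` until it meets a second vertex. -/
lemma exists_dotProduct_eq_neg_one (hV : IsVertexSet V Δ) (hv : v ∈ V) {q : Fin 2 → ℝ}
    (hq : q ≠ 0) (hqv : q ⬝ᵥ v = 0) :
    ∃ w ∈ V, 0 < q ⬝ᵥ w ∧ ∃ y ∈ polarDual V, y ⬝ᵥ v = -1 ∧ y ⬝ᵥ w = -1 := by
  obtain ⟨y, hy, hyv⟩ := exists_mem_polarDual_dotProduct_eq_neg_one hV.convex
    hV.zero_mem_interior (hV.notMem_interior hv)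
  rw [hV.polarDual_eq] at hy
  obtain ⟨z, hz, hqz⟩ := hV.exists_mem_dotProduct_pos hq
  obtain ⟨w, hw, hmin⟩ := (V.filter fun z => 0 < q ⬝ᵥ z).exists_min_image
    (fun z => (1 + y ⬝ᵥ z) / q ⬝ᵥ z) ⟨z, Finset.mem_filter.2 ⟨hz, hqz⟩⟩
  obtain ⟨hw, hqw⟩ := Finset.mem_filter.1 hw
  set s := (1 + y ⬝ᵥ w) / q ⬝ᵥ w with hs
  have hs0 : 0 ≤ s := div_nonneg (by linarith [mem_polarDual.1 hy w hw]) hqw.le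
  refine ⟨w, hw, hqw, y - s • q, mem_polarDual.2 fun z hz => ?_, ?_, ?_⟩
  · rw [sub_dotProduct, smul_dotProduct, smul_eq_mul]
    rcases le_or_gt (q ⬝ᵥ z) 0 with hqz | hqz
    · nlinarith [mem_polarDual.1 hy z hz]
    · have := (le_div_iff₀ hqz).1 (hmin z (Finset.mem_filter.2 ⟨hz, hqz⟩))
      linarith
  · rw [sub_dotProduct, smul_dotProduct, hqv, smul_zero, sub_zero, hyv]
  · rw [sub_dotProduct, smul_dotProduct, smul_eq_mul, hs, div_mul_cancel₀ _ hqw.ne']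
    ring

lemma exists_isEdge_left (hV : IsVertexSet V Δ) (hv : v ∈ V) : ∃ w, IsEdge V v w := by
  obtain ⟨w, hw, hvw, y, hy, hyv, hyw⟩ := hV.exists_dotProduct_eq_neg_one hv
    (quarterTurn_ne_zero (hV.ne_zero hv)) (by rw [quarterTurn_dotProduct, wedge_self])
  rw [quarterTurn_dotProduct] at hvw
  exact ⟨w, hv, hw, hvw, eq_dualVertex hvw.ne' hyv hyw ▸ hy⟩

lemma exists_isEdge_right (hV : IsVertexSet V Δ) (hv : v ∈ V) : ∃ t, IsEdge V t v := by
  obtain ⟨t, ht, htv, y, hy, hyv, hyt⟩ := hV.exists_dotProduct_eq_neg_one hv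
    (neg_ne_zero.2 (quarterTurn_ne_zero (hV.ne_zero hv)))
    (by rw [neg_dotProduct, quarterTurn_dotProduct, wedge_self, neg_zero])
  rw [neg_dotProduct, quarterTurn_dotProduct, ← wedge_swap] at htv
  exact ⟨t, ht, hv, htv, eq_dualVertex htv.ne' hyt hyv ▸ hy⟩

lemma neg_one_lt_dotProduct (hV : IsVertexSet V Δ) (he : IsEdge V u w) (hz : z ∈ V) (hzu : z ≠ u)
    (hzw : z ≠ w) : -1 < dualVertex u w ⬝ᵥ z := by
  refine (he.neg_one_le z hz).lt_of_ne' fun hz1 => ?_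
  have hd := he.wedge_pos.ne'
  refine not_collinear_of_mem_extremePoints (hV.mem_extremePoints he.left_mem)
    (hV.mem_extremePoints he.right_mem) (hV.mem_extremePoints hz) he.ne hzw.symm hzu ?_
  rw [dualVertex_dotProduct, neg_inj, div_eq_one_iff_eq hd] at hz1
  have hzexp := wedge_smul_eq u w z
  refine (collinear_iff_of_mem (Set.mem_insert u _)).2 ⟨w - u, ?_⟩
  simp only [Set.mem_insert_iff, Set.mem_singleton_iff, forall_eq_or_imp, forall_eq]
  refine ⟨⟨0, by simp⟩, ⟨1, by simp⟩, wedge u z / wedge u w, ?_⟩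
  rw [vadd_eq_add, ← smul_right_inj hd, hzexp, smul_add, smul_smul, mul_div_cancel₀ _ hd, ← hz1]
  module

lemma isEdge_right_unique (hV : IsVertexSet V Δ) (h : IsEdge V v w) (h' : IsEdge V v w') :
    w = w' := by
  by_contra hne
  have h1 := hV.neg_one_lt_dotProduct h h'.right_mem h'.ne.symm (Ne.symm hne)
  have h2 := hV.neg_one_lt_dotProduct h' h.right_mem h.ne.symm hne
  rw [dualVertex_dotProduct, neg_lt_neg_iff, div_lt_one (IsEdge.wedge_pos ‹_›)] at h1 h2
  linarith [wedge_swap w w']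

lemma isEdge_left_unique (hV : IsVertexSet V Δ) (h : IsEdge V t v) (h' : IsEdge V t' v) :
    t = t' := by
  by_contra hne
  have h1 := hV.neg_one_lt_dotProduct h h'.left_mem (Ne.symm hne) h'.ne
  have h2 := hV.neg_one_lt_dotProduct h' h.left_mem hne h.ne
  rw [dualVertex_dotProduct, neg_lt_neg_iff, div_lt_one (IsEdge.wedge_pos ‹_›)] at h1 h2
  linarith [wedge_swap t t']

lemma wedge_dualVertex_pos (hV : IsVertexSet V Δ) (h : IsEdge V t v) (h' : IsEdge V v w) :
    0 < wedge (dualVertex t v) (dualVertex v w) := by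
  have htw : w ≠ t := by
    rintro rfl
    linarith [h.wedge_pos, h'.wedge_pos, wedge_swap v w]
  have hmul := wedge_dualVertex_mul_wedge h.wedge_pos.ne' h'.wedge_pos.ne' w
  rw [dualVertex_dotProduct_right h'.wedge_pos.ne'] at hmul
  refine pos_of_mul_pos_left ?_ h'.wedge_pos.le
  linarith [hV.neg_one_lt_dotProduct h h'.right_mem htw h'.ne.symm]

lemma eq_of_dualVertex_eq (hV : IsVertexSet V Δ) (h : IsEdge V u w) (h' : IsEdge V u' w')
    (heq : dualVertex u w = dualVertex u' w') : u = u' ∧ w = w' := by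
  have mem {z} (hz : z ∈ V) (hz1 : dualVertex u' w' ⬝ᵥ z = -1) : z = u ∨ z = w := by
    by_contra! hne
    exact (hV.neg_one_lt_dotProduct h hz hne.1 hne.2).ne' (heq ▸ hz1)
  rcases mem h'.left_mem (dualVertex_dotProduct_left h'.wedge_pos.ne') with rfl | rfl
  · exact ⟨rfl, hV.isEdge_right_unique h h'⟩
  · rcases mem h'.right_mem (dualVertex_dotProduct_right h'.wedge_pos.ne') with rfl | rfl
    · linarith [h.wedge_pos, h'.wedge_pos, wedge_swap u' w']
    · exact (h'.ne rfl).elim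

end IsVertexSet

section Edges

open scoped Classical in
/-- The counterclockwise edges of the polygon with vertex set `V`. -/
def edges (V : Finset (Fin 2 → ℝ)) : Finset ((Fin 2 → ℝ) × (Fin 2 → ℝ)) :=
  (V ×ˢ V).filter fun e => IsEdge V e.1 e.2

lemma mem_edges {e : (Fin 2 → ℝ) × (Fin 2 → ℝ)} : e ∈ edges V ↔ IsEdge V e.1 e.2 := by
  simpa [edges] using fun h => ⟨h.left_mem, h.right_mem⟩

/-- Take an edge whose dual vertex minimises the pairing with `x`: since neither neighbouring edge
does better, `x` is on the inner side of both bounding rays. -/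
lemma IsVertexSet.exists_edge_wedge_nonneg (hV : IsVertexSet V Δ) (x : Fin 2 → ℝ) :
    ∃ e ∈ edges V, 0 ≤ wedge e.1 x ∧ 0 ≤ wedge x e.2 := by
  have hne : (edges V).Nonempty := by
    obtain ⟨v, hv⟩ := hV.nonempty
    obtain ⟨w, hw⟩ := hV.exists_isEdge_left hv
    exact ⟨(v, w), mem_edges.2 hw⟩
  obtain ⟨⟨u, w⟩, he, hmin⟩ := (edges V).exists_min_image (fun e => dualVertex e.1 e.2 ⬝ᵥ x) hne
  have he' := mem_edges.1 he
  obtain ⟨t, ht⟩ := hV.exists_isEdge_right he'.left_mem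
  obtain ⟨y, hy⟩ := hV.exists_isEdge_left he'.right_mem
  refine ⟨(u, w), he, ?_, ?_⟩
  · refine nonneg_of_mul_nonneg_right ?_ (hV.wedge_dualVertex_pos ht he')
    rw [wedge_dualVertex_mul_wedge ht.wedge_pos.ne' he'.wedge_pos.ne', sub_nonneg]
    exact hmin (t, u) (mem_edges.2 ht)
  · rw [wedge_swap, neg_nonneg]
    refine nonpos_of_mul_nonpos_right ?_ (hV.wedge_dualVertex_pos he' hy)
    rw [wedge_dualVertex_mul_wedge he'.wedge_pos.ne' hy.wedge_pos.ne', sub_nonpos]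
    exact hmin (w, y) (mem_edges.2 hy)

lemma IsVertexSet.eq_of_inCone (hV : IsVertexSet V Δ) (h : IsEdge V u w) (h' : IsEdge V u' w')
    (hx : InCone u w x) (hx' : InCone u' w' x) : u = u' ∧ w = w' := by
  refine hV.eq_of_dualVertex_eq h h' (by_contra fun hne => ?_)
  exact (dualVertex_dotProduct_lt h.wedge_pos hx (h'.neg_one_le _ h.left_mem)
    (h'.neg_one_le _ h.right_mem) (Ne.symm hne)).not_gt (dualVertex_dotProduct_lt h'.wedge_pos hx'
    (h.neg_one_le _ h'.left_mem) (h.neg_one_le _ h'.right_mem) hne)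

theorem IsVertexSet.existsUnique_inCone (hV : IsVertexSet V Δ)
    (hx : ∀ e ∈ edges V, wedge e.1 x ≠ 0 ∧ wedge e.2 x ≠ 0) :
    ∃! e, e ∈ edges V ∧ InCone e.1 e.2 x := by
  obtain ⟨e, he, hle, hge⟩ := hV.exists_edge_wedge_nonneg x
  have hne := (hx e he).2
  rw [← neg_ne_zero, ← wedge_swap] at hne
  have hxe : InCone e.1 e.2 x := ⟨hle.lt_of_ne' (hx e he).1, hge.lt_of_ne' hne⟩
  exact ⟨e, ⟨he, hxe⟩, fun e' ⟨he', hxe'⟩ =>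
    Prod.ext_iff.2 (hV.eq_of_inCone (mem_edges.1 he') (mem_edges.1 he) hxe' hxe)⟩

lemma IsVertexSet.sum_edges_eq_sum_next {M : Type*} [AddCommMonoid M] (hV : IsVertexSet V Δ)
    {next : (Fin 2 → ℝ) → Fin 2 → ℝ} (hnext : ∀ v ∈ V, IsEdge V v (next v))
    (f : (Fin 2 → ℝ) → (Fin 2 → ℝ) → M) :
    ∑ e ∈ edges V, f e.1 e.2 = ∑ v ∈ V, f v (next v) := by
  have eq_next {e} (he : e ∈ edges V) : next e.1 = e.2 :=
    hV.isEdge_right_unique (hnext _ (mem_edges.1 he).left_mem) (mem_edges.1 he)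
  exact Finset.sum_nbij' Prod.fst (fun v => (v, next v)) (fun e he => (mem_edges.1 he).left_mem)
    (fun v hv => mem_edges.2 (hnext v hv)) (fun e he => Prod.ext rfl (eq_next he))
    (fun _ _ => rfl) fun e he => by rw [eq_next he]

lemma IsVertexSet.sum_edges_eq_sum_prev {M : Type*} [AddCommMonoid M] (hV : IsVertexSet V Δ)
    {prev : (Fin 2 → ℝ) → Fin 2 → ℝ} (hprev : ∀ v ∈ V, IsEdge V (prev v) v)
    (f : (Fin 2 → ℝ) → (Fin 2 → ℝ) → M) :
    ∑ e ∈ edges V, f e.1 e.2 = ∑ v ∈ V, f (prev v) v := by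
  have eq_prev {e} (he : e ∈ edges V) : prev e.2 = e.1 :=
    hV.isEdge_left_unique (hprev _ (mem_edges.1 he).right_mem) (mem_edges.1 he)
  exact Finset.sum_nbij' Prod.snd (fun v => (prev v, v)) (fun e he => (mem_edges.1 he).right_mem)
    (fun v hv => mem_edges.2 (hprev v hv)) (fun e he => Prod.ext (eq_prev he) rfl)
    (fun _ _ => rfl) fun e he => by rw [eq_prev he]

end Edges

/-! ### The dual polygon -/

section DualPolygon

open scoped Classical in
/-- The vertices of the dual of the polygon with vertex set `V`. -/
def dualVertices (V : Finset (Fin 2 → ℝ)) : Finset (Fin 2 → ℝ) :=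
  (edges V).image fun e => dualVertex e.1 e.2

lemma mem_dualVertices {y : Fin 2 → ℝ} :
    y ∈ dualVertices V ↔ ∃ u w, IsEdge V u w ∧ dualVertex u w = y := by
  simp [dualVertices, mem_edges]

namespace IsVertexSet

lemma dualVertex_mem_polarDual (hV : IsVertexSet V Δ) (h : IsEdge V u w) :
    dualVertex u w ∈ polarDual Δ := by
  rw [hV.polarDual_eq]
  exact h.neg_one_le

lemma convexHull_dualVertices (hV : IsVertexSet V Δ) :
    convexHull ℝ (dualVertices V : Set (Fin 2 → ℝ)) = polarDual Δ := by
  refine (convexHull_min (fun y hy => ?_) (convex_polarDual Δ)).antisymm fun y hy => ?_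
  · obtain ⟨u, w, h, rfl⟩ := mem_dualVertices.1 hy
    exact hV.dualVertex_mem_polarDual h
  by_contra hyV
  obtain ⟨f, c, hfy, hfV⟩ := geometric_hahn_banach_point_closed (convex_convexHull ℝ _)
    ((dualVertices V).finite_toSet.isClosed_convexHull ℝ) hyV
  obtain ⟨x, hx⟩ := (dotProductEquiv ℝ (Fin 2)).surjective f.toLinearMap
  have hxf (z) : z ⬝ᵥ x = f z := (dotProduct_comm z x).trans congr($hx z)
  obtain ⟨e, he, hux, hxw⟩ := hV.exists_edge_wedge_nonneg x
  have h := mem_edges.1 he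
  rw [hV.polarDual_eq] at hy
  refine (hfy.trans (hfV _ (subset_convexHull ℝ _ (mem_dualVertices.2 ⟨_, _, h, rfl⟩)))).not_ge ?_
  rw [← hxf, ← hxf]
  exact dualVertex_dotProduct_le h.wedge_pos hux hxw (hy _ h.left_mem) (hy _ h.right_mem)

lemma dualVertex_mem_extremePoints (hV : IsVertexSet V Δ) (h : IsEdge V u w) :
    dualVertex u w ∈ Set.extremePoints ℝ (polarDual Δ) := by
  have mem_Δ {z} (hz : z ∈ V) : z ∈ Δ := (hV.mem_extremePoints hz).1
  have hd := h.wedge_pos.ne'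
  exact ⟨hV.dualVertex_mem_polarDual h, fun y hy z hz hyz => eq_dualVertex hd
    (dotProduct_eq_neg_one_of_mem_openSegment hy hz hyz (mem_Δ h.left_mem)
      (dualVertex_dotProduct_left hd))
    (dotProduct_eq_neg_one_of_mem_openSegment hy hz hyz (mem_Δ h.right_mem)
      (dualVertex_dotProduct_right hd))⟩

theorem dual (hV : IsVertexSet V Δ) : IsVertexSet (dualVertices V) (polarDual Δ) where
  convexHull_eq := hV.convexHull_dualVertices
  extremePoints_eq := by
    refine Set.Subset.antisymm ?_ fun y hy => ?_
    · rw [← hV.convexHull_dualVertices]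
      exact extremePoints_convexHull_subset
    · obtain ⟨u, w, h, rfl⟩ := mem_dualVertices.1 hy
      exact hV.dualVertex_mem_extremePoints h
  zero_mem_interior := by
    rw [hV.polarDual_eq]
    exact zero_mem_interior_polarDual V.finite_toSet

lemma dualVertex_dualVertex (hV : IsVertexSet V Δ) (h : IsEdge V t v) (h' : IsEdge V v w) :
    dualVertex (dualVertex t v) (dualVertex v w) = v :=
  (eq_dualVertex (hV.wedge_dualVertex_pos h h').ne'
    (by rw [dotProduct_comm, dualVertex_dotProduct_right h.wedge_pos.ne'])
    (by rw [dotProduct_comm, dualVertex_dotProduct_left h'.wedge_pos.ne'])).symm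

lemma isEdge_dualVertex (hV : IsVertexSet V Δ) (h : IsEdge V t v) (h' : IsEdge V v w) :
    IsEdge (dualVertices V) (dualVertex t v) (dualVertex v w) where
  left_mem := mem_dualVertices.2 ⟨t, v, h, rfl⟩
  right_mem := mem_dualVertices.2 ⟨v, w, h', rfl⟩
  wedge_pos := hV.wedge_dualVertex_pos h h'
  neg_one_le y hy := by
    obtain ⟨_, _, he, rfl⟩ := mem_dualVertices.1 hy
    rw [hV.dualVertex_dualVertex h h', dotProduct_comm]
    exact he.neg_one_le v h.right_mem

lemma sum_edges_dualVertices (hV : IsVertexSet V Δ) {prev next : (Fin 2 → ℝ) → Fin 2 → ℝ}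
    (hprev : ∀ v ∈ V, IsEdge V (prev v) v) (hnext : ∀ v ∈ V, IsEdge V v (next v)) :
    ∑ e ∈ edges (dualVertices V), wedge e.1 e.2 =
      ∑ v ∈ V, wedge (dualVertex (prev v) v) (dualVertex v (next v)) := by
  have dual_eq {v} (hv : v ∈ V) := hV.dualVertex_dualVertex (hprev v hv) (hnext v hv)
  refine (Finset.sum_bij (fun v _ => (dualVertex (prev v) v, dualVertex v (next v)))
    (fun v hv => mem_edges.2 (hV.isEdge_dualVertex (hprev v hv) (hnext v hv)))
    (fun v hv v' hv' heq => ?_) (fun e he => ?_) fun _ _ => rfl).symm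
  · rw [Prod.mk.injEq] at heq
    rw [← dual_eq hv, ← dual_eq hv', heq.1, heq.2]
  · obtain ⟨t, v, h, hp⟩ := mem_dualVertices.1 (mem_edges.1 he).left_mem
    have hv := h.right_mem
    obtain rfl := hV.isEdge_left_unique h (hprev v hv)
    exact ⟨v, hv, Prod.ext hp (hV.dual.isEdge_right_unique (hV.isEdge_dualVertex h (hnext v hv))
      (hp ▸ mem_edges.1 he))⟩

theorem sum_edges_add_sum_edges_dual (hV : IsVertexSet V Δ) :
    ∑ e ∈ edges V, wedge e.1 e.2 + ∑ e ∈ edges (dualVertices V), wedge e.1 e.2 =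
      ∑ e ∈ edges V, coneTerm e.1 e.2 := by
  choose! prev hprev using fun v => hV.exists_isEdge_right (v := v)
  choose! next hnext using fun v => hV.exists_isEdge_left (v := v)
  have hdual : ∑ e ∈ edges (dualVertices V), wedge e.1 e.2 =
      ∑ e ∈ edges V, (1 - e.1 ⬝ᵥ e.2 / e.2 ⬝ᵥ e.2) / wedge e.1 e.2
        + ∑ e ∈ edges V, (1 - e.1 ⬝ᵥ e.2 / e.1 ⬝ᵥ e.1) / wedge e.1 e.2 := by
    rw [hV.sum_edges_dualVertices hprev hnext,
      hV.sum_edges_eq_sum_prev hprev fun t v => (1 - t ⬝ᵥ v / v ⬝ᵥ v) / wedge t v,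
      hV.sum_edges_eq_sum_next hnext fun v w => (1 - v ⬝ᵥ w / v ⬝ᵥ v) / wedge v w,
      ← Finset.sum_add_distrib]
    exact Finset.sum_congr rfl fun v hv =>
      wedge_dualVertex (hprev v hv).wedge_pos.ne' (hnext v hv).wedge_pos.ne'
  rw [hdual, ← Finset.sum_add_distrib, ← Finset.sum_add_distrib]
  refine Finset.sum_congr rfl fun e _ => ?_
  rw [coneTerm]
  ring

end IsVertexSet

end DualPolygon

end Polygon

/-! ### Areas -/

section Triangle

lemma smul_add_smul_mem {E : Type*} [AddCommGroup E] [Module ℝ E] {s : Set E} {u w : E} {a b : ℝ}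
    (hs : Convex ℝ s) (h0 : 0 ∈ s) (hu : u ∈ s) (hw : w ∈ s) (ha : 0 ≤ a) (hb : 0 ≤ b)
    (hab : a + b ≤ 1) : a • u + b • w ∈ s := by
  rcases eq_or_lt_of_le (add_nonneg ha hb) with h | h
  · rw [(add_eq_zero_iff_of_nonneg ha hb).1 h.symm |>.1,
      (add_eq_zero_iff_of_nonneg ha hb).1 h.symm |>.2]
    simpa using h0
  · simpa only [smul_add, smul_smul, mul_div_cancel₀ _ h.ne'] using
      hs.smul_mem_of_zero_mem h0 (hs hu hw (div_nonneg ha h.le) (div_nonneg hb h.le)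
        (by rw [← add_div, div_self h.ne'])) ⟨h.le, hab⟩

lemma ae_dotProduct_ne {d : ℕ} {q : Fin d → ℝ} (hq : q ≠ 0) (c : ℝ) :
    ∀ᵐ x : Fin d → ℝ, q ⬝ᵥ x ≠ c := by
  have hqq : q ⬝ᵥ q ≠ 0 := (dotProduct_self_pos hq).ne'
  let f := dotProductEquiv ℝ (Fin d) q
  have hf : LinearMap.ker f ≠ ⊤ := fun h => hqq (LinearMap.congr_fun (LinearMap.ker_eq_top.1 h) q)
  let H := AffineSubspace.mk' ((c / q ⬝ᵥ q) • q) (LinearMap.ker f)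
  have hH : H ≠ ⊤ := fun h => hf <| by
    rw [← AffineSubspace.direction_mk' ((c / q ⬝ᵥ q) • q) (LinearMap.ker f),
      ← AffineSubspace.direction_top ℝ (Fin d → ℝ) (Fin d → ℝ), ← h]
  refine measure_mono_null (fun x hx => ?_) (Measure.addHaar_affineSubspace volume H hH)
  have hx : q ⬝ᵥ x = c := not_not.1 hx
  refine AffineSubspace.mem_mk'.2 (LinearMap.mem_ker.2 ?_)
  change q ⬝ᵥ (x - (c / q ⬝ᵥ q) • q) = 0
  rw [dotProduct_sub, dotProduct_smul, hx, smul_eq_mul, div_mul_cancel₀ _ hqq, sub_self]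

lemma volume_setOf_add_lt {c : ℝ} (hc : 0 ≤ c) :
    volume {x : Fin 2 → ℝ | 0 < x 0 ∧ 0 < x 1 ∧ x 0 + x 1 < c} = ENNReal.ofReal (c ^ 2 / 2) := by
  have hpre : {x : Fin 2 → ℝ | 0 < x 0 ∧ 0 < x 1 ∧ x 0 + x 1 < c} =
      MeasurableEquiv.finTwoArrow ⁻¹'
        regionBetween (fun _ => 0) (fun a => c - a) (Set.Ioo 0 c) := by
    ext x
    simp only [regionBetween, Set.mem_ofPred_eq, Set.mem_preimage, Set.mem_Ioo,
      MeasurableEquiv.finTwoArrow_apply]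
    constructor <;> intro h <;> refine ⟨?_, ?_, ?_⟩ <;> grind
  have hmeas : MeasurableSet
      (regionBetween (fun _ : ℝ => (0 : ℝ)) (fun a => c - a) (Set.Ioo 0 c)) :=
    measurableSet_regionBetween (by fun_prop) (by fun_prop) measurableSet_Ioo
  rw [hpre, (volume_preserving_finTwoArrow ℝ).measure_preimage hmeas.nullMeasurableSet,
    Measure.volume_eq_prod, volume_regionBetween_eq_integral]
  · congr 1
    simp only [Pi.sub_apply, sub_zero]
    rw [← integral_Ioc_eq_integral_Ioo, ← intervalIntegral.integral_of_le hc,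
      intervalIntegral.integral_sub (by simp) (by simp), integral_id]
    simp only [intervalIntegral.integral_const, smul_eq_mul]
    ring
  · exact integrableOn_zero
  · exact ((by fun_prop : Continuous fun a : ℝ => c - a).integrableOn_Icc).mono_set
      Set.Ioo_subset_Icc_self
  · exact measurableSet_Ioo
  · intro x hx; linarith [hx.2]

/-- The open triangle with vertices `0`, `p` and `q`, for `wedge p q` positive. -/
def openTriangle (p q : Fin 2 → ℝ) : Set (Fin 2 → ℝ) :=
  {x | InCone p q x ∧ wedge x q + wedge p x < wedge p q}

variable {p q : Fin 2 → ℝ}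

lemma isOpen_openTriangle (p q : Fin 2 → ℝ) : IsOpen (openTriangle p q) := by
  have hp : Continuous (wedge p) := by unfold wedge; fun_prop
  have hq : Continuous fun x => wedge x q := by unfold wedge; fun_prop
  exact ((isOpen_lt continuous_const hp).inter (isOpen_lt continuous_const hq)).inter
    (isOpen_lt (hq.add hp) continuous_const)

lemma volume_openTriangle (h : 0 < wedge p q) :
    volume (openTriangle p q) = ENNReal.ofReal (wedge p q / 2) := by
  let M : Matrix (Fin 2) (Fin 2) ℝ := ![-quarterTurn q, quarterTurn p]
  have hM : LinearMap.det (Matrix.toLin' M) = wedge p q := by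
    rw [LinearMap.det_toLin', Matrix.det_fin_two, wedge]
    simp only [M, quarterTurn, Pi.neg_apply, Matrix.cons_val_zero, Matrix.cons_val_one]
    ring
  have hpre : openTriangle p q = Matrix.toLin' M ⁻¹'
      {x | 0 < x 0 ∧ 0 < x 1 ∧ x 0 + x 1 < wedge p q} := by
    ext x
    have hx0 : Matrix.toLin' M x 0 = wedge x q := by
      rw [wedge_swap, ← quarterTurn_dotProduct, ← neg_dotProduct]
      rfl
    have hx1 : Matrix.toLin' M x 1 = wedge p x := quarterTurn_dotProduct p x
    change (0 < _ ∧ 0 < _) ∧ _ ↔ 0 < _ ∧ 0 < _ ∧ _ < _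
    rw [hx0, hx1]
    tauto
  rw [hpre, Measure.addHaar_preimage_linearMap volume (hM.symm ▸ h.ne'), hM,
    volume_setOf_add_lt h.le, ← ENNReal.ofReal_mul (abs_nonneg _), abs_of_pos (inv_pos.2 h)]
  congr 1
  field_simp

end Triangle

section Area

variable {V : Finset (Fin 2 → ℝ)} {Δ : Set (Fin 2 → ℝ)} {u w x : Fin 2 → ℝ}

namespace IsVertexSet

lemma ae_wedge_ne_zero (hV : IsVertexSet V Δ) :
    ∀ᵐ x, ∀ e ∈ edges V, wedge e.1 x ≠ 0 ∧ wedge e.2 x ≠ 0 := by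
  have hv : ∀ v ∈ V, ∀ᵐ x, wedge v x ≠ 0 := fun v hv =>
    (ae_dotProduct_ne (quarterTurn_ne_zero (hV.ne_zero hv)) 0).mono fun x hx =>
      quarterTurn_dotProduct v x ▸ hx
  filter_upwards [(eventually_all_finset V).2 hv] with x hx e he
  exact ⟨hx _ (mem_edges.1 he).left_mem, hx _ (mem_edges.1 he).right_mem⟩

end IsVertexSet

lemma ae_dualVertex_dotProduct_ne (V : Finset (Fin 2 → ℝ)) :
    ∀ᵐ x, ∀ e ∈ edges V, dualVertex e.1 e.2 ⬝ᵥ x ≠ -1 := by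
  refine (eventually_all_finset _).2 fun e he => ae_dotProduct_ne (fun h0 => ?_) _
  have := dualVertex_dotProduct_left (mem_edges.1 he).wedge_pos.ne'
  rw [h0, zero_dotProduct] at this
  norm_num at this

lemma mem_openTriangle_iff (h : 0 < wedge u w) :
    x ∈ openTriangle u w ↔ InCone u w x ∧ -1 < dualVertex u w ⬝ᵥ x := by
  rw [dualVertex_dotProduct, neg_lt_neg_iff, div_lt_one h]
  rfl

namespace IsVertexSet

lemma openTriangle_subset (hV : IsVertexSet V Δ) (h : IsEdge V u w) : openTriangle u w ⊆ Δ := by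
  rintro x ⟨⟨hux, hxw⟩, hlt⟩
  have hd := h.wedge_pos
  have hx : x = (wedge x w / wedge u w) • u + (wedge u x / wedge u w) • w := by
    rw [div_eq_inv_mul, div_eq_inv_mul, mul_smul, mul_smul, ← smul_add, ← wedge_smul_eq,
      inv_smul_smul₀ hd.ne']
  have h0 : (0 : Fin 2 → ℝ) ∈ Δ := interior_subset hV.zero_mem_interior
  have hu : u ∈ Δ := (hV.mem_extremePoints h.left_mem).1
  have hw : w ∈ Δ := (hV.mem_extremePoints h.right_mem).1
  rw [hx]
  exact smul_add_smul_mem hV.convex h0 hu hw (div_nonneg hxw.le hd.le) (div_nonneg hux.le hd.le)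
    (by rw [← add_div]; exact div_le_one_of_le₀ hlt.le hd.le)

theorem v2_eq_sum_wedge (hV : IsVertexSet V Δ) : v2 Δ = ∑ e ∈ edges V, wedge e.1 e.2 := by
  have hae : Δ =ᵐ[volume] ⋃ e ∈ edges V, openTriangle e.1 e.2 := by
    refine EventuallyLE.antisymm ?_ (Eventually.of_forall
      (Set.iUnion₂_subset fun e he => hV.openTriangle_subset (mem_edges.1 he)))
    filter_upwards [hV.ae_wedge_ne_zero, ae_dualVertex_dotProduct_ne V] with x hx hx' hxΔ
    obtain ⟨e, he, hxe⟩ := (hV.existsUnique_inCone hx).exists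
    refine Set.mem_iUnion₂.2 ⟨e, he, (mem_openTriangle_iff (mem_edges.1 he).wedge_pos).2
      ⟨hxe, (hx' e he).symm.lt_of_le ?_⟩⟩
    exact hV.dualVertex_mem_polarDual (mem_edges.1 he) x hxΔ
  have hdisj : ((edges V : Finset _) : Set ((Fin 2 → ℝ) × (Fin 2 → ℝ))).PairwiseDisjoint
      fun e => openTriangle e.1 e.2 := fun e he e' he' hne =>
    Set.disjoint_left.2 fun x hx hx' => hne (Prod.ext_iff.2
      (hV.eq_of_inCone (mem_edges.1 he) (mem_edges.1 he') hx.1 hx'.1))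
  have hvol : volume Δ = ENNReal.ofReal (∑ e ∈ edges V, wedge e.1 e.2 / 2) := by
    rw [measure_congr hae, measure_biUnion_finset hdisj
      fun e _ => (isOpen_openTriangle _ _).measurableSet,
      ENNReal.ofReal_sum_of_nonneg fun e he => (half_pos (mem_edges.1 he).wedge_pos).le]
    exact Finset.sum_congr rfl fun e he => volume_openTriangle (mem_edges.1 he).wedge_pos
  rw [v2, hvol, ENNReal.toReal_ofReal
    (Finset.sum_nonneg fun e he => (half_pos (mem_edges.1 he).wedge_pos).le), ← Finset.sum_div]
  ring

theorem v2_add_v2_polarDual (hV : IsVertexSet V Δ) :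
    v2 Δ + v2 (polarDual Δ) = ∑ e ∈ edges V, coneTerm e.1 e.2 := by
  rw [hV.v2_eq_sum_wedge, hV.dual.v2_eq_sum_wedge, hV.sum_edges_add_sum_edges_dual]

end IsVertexSet

end Area

/-! ### Lattice polygons -/

section Lattice

variable {V : Finset (Fin 2 → ℝ)} {Δ : Set (Fin 2 → ℝ)}

theorem IsLatticePolytope.exists_isVertexSet (hΔ : IsLatticePolytope Δ) (h0 : 0 ∈ interior Δ) :
    ∃ V, IsVertexSet V Δ := by
  obtain ⟨W, rfl⟩ := hΔ
  have hW : (coeLat '' (W : Set (Fin 2 → ℤ))).Finite := W.finite_toSet.image _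
  have hext := hW.subset (extremePoints_convexHull_subset (𝕜 := ℝ))
  refine ⟨hext.toFinset, ?_, hext.coe_toFinset.symm, h0⟩
  rw [hext.coe_toFinset, ← (hext.isClosed_convexHull ℝ).closure_eq]
  exact closure_convexHull_extremePoints (hW.isCompact_convexHull ℝ) (convex_convexHull ℝ _)

lemma IsVertexSet.isLatticePolytope_iff (hV : IsVertexSet V Δ) :
    IsLatticePolytope Δ ↔ ∀ v ∈ V, v ∈ Set.range coeLat := by
  constructor
  · rintro ⟨W, hW⟩ v hv
    have hvW := hW ▸ hV.mem_extremePoints hv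
    exact Set.image_subset_range _ _ (extremePoints_convexHull_subset hvW)
  · intro h
    classical
    obtain ⟨W, -, rfl⟩ := Finset.subset_set_image_iff.1
      (show (V : Set (Fin 2 → ℝ)) ⊆ coeLat '' Set.univ from Set.image_univ ▸ h)
    exact ⟨W, by rw [← hV.convexHull_eq, Finset.coe_image]⟩

lemma dualVertex_coeLat_mem_range_iff {m n : Fin 2 → ℤ} (h : wedge m n ≠ 0) :
    dualVertex (coeLat m) (coeLat n) ∈ Set.range coeLat ↔ IsGorenstein m n := by
  have hR : ((wedge m n : ℤ) : ℝ) ≠ 0 := Int.cast_ne_zero.2 h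
  have coord (k : Fin 2 → ℤ) : coeLat k = dualVertex (coeLat m) (coeLat n) ↔
      n 0 - m 0 = wedge m n * k 1 ∧ n 1 - m 1 = wedge m n * -k 0 := by
    simp only [dualVertex, wedge_coeLat, coeLat, funext_iff, Fin.forall_fin_two,
      Matrix.cons_val_zero, Matrix.cons_val_one, eq_div_iff hR]
    norm_cast
    grind
  simp only [Set.mem_range, coord, IsGorenstein, Fin.forall_fin_two]
  constructor
  · rintro ⟨k, h0, h1⟩
    exact ⟨⟨_, h0⟩, ⟨_, h1⟩⟩
  · rintro ⟨⟨k, hk⟩, ⟨l, hl⟩⟩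
    exact ⟨![-l, k], hk, by simpa using hl⟩

variable {ℓ : (Fin 2 → ℝ) → Fin 2 → ℤ}

theorem IsVertexSet.isCompleteFan (hV : IsVertexSet V Δ) (hℓ : ∀ v ∈ V, coeLat (ℓ v) = v)
    (hprim : ∀ v ∈ V, IsCoprime (ℓ v 0) (ℓ v 1)) :
    IsCompleteFan (edges V) (fun e => ℓ e.1) (fun e => ℓ e.2) := by
  have wedge_ray {v} (hv : v ∈ V) (m) : wedge v (coeLat m) = wedge (ℓ v) m := by
    rw [← wedge_coeLat, hℓ v hv]
  have inCone_iff {e} (he : e ∈ edges V) (m) :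
      InCone e.1 e.2 (coeLat m) ↔ InCone (ℓ e.1) (ℓ e.2) m := by
    have h := mem_edges.1 he
    rw [InCone, InCone, wedge_swap e.2, wedge_swap (ℓ e.2), wedge_ray h.left_mem,
      wedge_ray h.right_mem]
    norm_cast
  refine ⟨fun e he => hprim _ (mem_edges.1 he).left_mem,
    fun e he => hprim _ (mem_edges.1 he).right_mem, fun e he => ?_, fun m hm => ?_⟩
  · have h := mem_edges.1 he
    have hpos := h.wedge_pos
    rw [← hℓ _ h.right_mem, wedge_ray h.left_mem] at hpos
    exact_mod_cast hpos
  · refine (existsUnique_congr fun e => and_congr_right fun he => inCone_iff he m).1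
      (hV.existsUnique_inCone fun e he => ?_)
    rw [wedge_ray (mem_edges.1 he).left_mem, wedge_ray (mem_edges.1 he).right_mem]
    exact_mod_cast hm e he

lemma IsVertexSet.isLatticePolytope_polarDual_iff (hV : IsVertexSet V Δ)
    (hℓ : ∀ v ∈ V, coeLat (ℓ v) = v) :
    IsLatticePolytope (polarDual Δ) ↔ ∀ e ∈ edges V, IsGorenstein (ℓ e.1) (ℓ e.2) := by
  rw [hV.dual.isLatticePolytope_iff, dualVertices, Finset.forall_mem_image]
  refine forall₂_congr fun e he => ?_
  have h := mem_edges.1 he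
  have hpos := h.wedge_pos
  rw [← hℓ _ h.left_mem, ← hℓ _ h.right_mem, wedge_coeLat, Int.cast_pos] at hpos
  rw [← dualVertex_coeLat_mem_range_iff hpos.ne', hℓ _ h.left_mem, hℓ _ h.right_mem]

end Lattice

theorem LDP_twelve_ineq (Δ : Set (Fin 2 → ℝ)) (hΔ : IsLDP Δ) :
    12 ≤ v2 Δ + v2 (polarDual Δ) ∧
      (v2 Δ + v2 (polarDual Δ) = 12 ↔ IsReflexive Δ) := by
  obtain ⟨hlat, -, h0, hprim⟩ := hΔ
  obtain ⟨V, hV⟩ := hlat.exists_isVertexSet h0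
  rw [hV.extremePoints_eq] at hprim
  choose! ℓ hℓ hgcd using hprim
  have hfan := hV.isCompleteFan hℓ fun v hv => Int.isCoprime_iff_gcd_eq_one.2 (hgcd v hv)
  have hsum : v2 Δ + v2 (polarDual Δ) =
      ∑ e ∈ edges V, coneTerm (coeLat (ℓ e.1)) (coeLat (ℓ e.2)) := by
    rw [hV.v2_add_v2_polarDual]
    refine Finset.sum_congr rfl fun e he => ?_
    rw [hℓ _ (mem_edges.1 he).left_mem, hℓ _ (mem_edges.1 he).right_mem]
  have hrefl : IsReflexive Δ ↔ ∀ e ∈ edges V, IsGorenstein (ℓ e.1) (ℓ e.2) := by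
    rw [← hV.isLatticePolytope_polarDual_iff hℓ, IsReflexive, and_iff_right hlat, and_iff_right h0]
  rw [hsum, hrefl]
  exact hfan.twelve_le_sum_coneTerm

end
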